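/- There exists a constant C > 0 such that for every integer N ≥ 2, every t ∈ [0,1], and every ρ ∈ ℝ: |(1/N)·log E_N(t,ρ)| ≤ C·(log N)/N. -/

import Mathlib

open Set Filter

noncomputable def GP : ℝ → ℝ := fun x => x * Real.log x + (1 - x) * Real.log (1 - x)

noncomputable def Gt (f0 f1 : ℝ → ℝ) (t : ℝ) : ℝ → ℝ :=
  fun x => GP x + ((1 - t) * f0 x + t * f1 x)

noncomputable def Phase (G : ℝ → ℝ) (α : ℝ) : ℝ → ℝ :=
  fun x => (x - α) * deriv G x - (G x - G α)

noncomputable def Qnorm (G : ℝ → ℝ) (N : ℕ) (α : ℝ) : ℝ :=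
  2 * Real.pi * ∫ x in (0:ℝ)..1, Real.exp (-(N : ℝ) * Phase G α x)

noncomputable def RPhase (G : ℝ → ℝ) (α : ℝ) : ℝ → ℝ :=
  fun y => (1 / α) * Phase G α (α * (1 + y))

noncomputable def Leg (G : ℝ → ℝ) (S : Set ℝ) : ℝ → ℝ :=
  fun ρ => sSup ((fun x => x * ρ - G x) '' S)

noncomputable def QQ (G : ℝ → ℝ) (N : ℕ) (α : ℝ) : ℝ :=
  Qnorm G N α * Real.exp ((N : ℝ) * G α)

noncomputable def Ecal (f0 f1 : ℝ → ℝ) (N : ℕ) (t ρ : ℝ) : ℝ :=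
  ∑ k ∈ Finset.range (N + 1),
    Real.exp ((N:ℝ) * (((k:ℝ)/(N:ℝ)) * ρ - Leg (Gt f0 f1 t) (Set.Icc 0 1) ρ)) /
      ((QQ (Gt f0 f1 0) N ((k:ℝ)/(N:ℝ))) ^ ((1:ℝ) - t) *
        (QQ (Gt f0 f1 1) N ((k:ℝ)/(N:ℝ))) ^ t)

/-!
Write `G = GP + f` with `f` Lipschitz on `[0, 1]`, and let `φ_a(x)` be the Bregman divergence
`Phase G a x`. Bounding the Kullback–Leibler divergence of two Bernoulli laws by their
`χ²`-divergence gives `φ_a(x) ≤ (x - a)² / (x (1 - x)) + 2 L |x - a|`. This is `O(1 / N)` on some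
interval of length `1 / (4 N)` next to any `a ∈ [0, 1]`, and also for any `x` when `a = k / N` is
`x` rounded towards the nearer endpoint. The interval, together with `φ ≥ 0` (convexity), pins the
norming constants between `c / N` and `2 π`. Taking for `x` the maximiser in the Legendre transform,
the grid point yields a summand of `E_N` bounded below, while all summands are `O(N)` by the
Fenchel–Young inequality. Hence `1 / B ≤ E_N ≤ B N²` with `B` depending only on `L`.
-/

open MeasureTheory Topology
open scoped NNReal

/-! ### The entropy potential -/

theorem GP_eq_neg_binEntropy : GP = -Real.binEntropy := by
  ext x
  simp only [GP, Pi.neg_apply, Real.binEntropy, Real.log_inv]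
  ring

theorem continuous_GP : Continuous GP :=
  GP_eq_neg_binEntropy ▸ Real.binEntropy_continuous.neg

theorem hasDerivAt_GP {x : ℝ} (hx : x ∈ Ioo (0 : ℝ) 1) :
    HasDerivAt GP (Real.log x - Real.log (1 - x)) x := by
  simpa only [GP_eq_neg_binEntropy, neg_sub] using
    (Real.hasDerivAt_binEntropy hx.1.ne' hx.2.ne).neg

theorem mul_log_sub_log_le {a x : ℝ} (ha : 0 ≤ a) (hx : 0 < x) :
    a * (Real.log a - Real.log x) ≤ a * (a / x - 1) := by
  rcases ha.eq_or_lt with rfl | ha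
  · simp
  · rw [← Real.log_div ha.ne' hx.ne']
    gcongr
    exact Real.log_le_sub_one_of_pos (by positivity)

-- The left side is the Kullback–Leibler divergence of Bernoulli laws, the right side the `χ²` one.
theorem Phase_GP_le {x a : ℝ} (hx : x ∈ Ioo (0 : ℝ) 1) (ha : a ∈ Icc (0 : ℝ) 1) :
    Phase GP a x ≤ (x - a) ^ 2 / (x * (1 - x)) := by
  have hx1 : 0 < 1 - x := sub_pos.2 hx.2
  calc Phase GP a x
      = a * (Real.log a - Real.log x) + (1 - a) * (Real.log (1 - a) - Real.log (1 - x)) := by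
        simp only [Phase, (hasDerivAt_GP hx).deriv, GP]
        ring
    _ ≤ a * (a / x - 1) + (1 - a) * ((1 - a) / (1 - x) - 1) :=
        add_le_add (mul_log_sub_log_le ha.1 hx.1) (mul_log_sub_log_le (sub_nonneg.2 ha.2) hx1)
    _ = (x - a) ^ 2 / (x * (1 - x)) := by
        field_simp [hx.1.ne']
        ring

/-! ### Bregman divergences of Lipschitz perturbations -/

/-- Upper bound for the Bregman divergence at `(a, x)` of an `L`-Lipschitz perturbation of `GP`:
the Bernoulli `χ²`-divergence plus a Lipschitz error. -/
noncomputable def bregmanBound (L x a : ℝ) : ℝ :=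
  (x - a) ^ 2 / (x * (1 - x)) + 2 * L * |x - a|

theorem bregmanBound_le {L δ x a : ℝ} (hL : 0 ≤ L) (hx : x ∈ Ioo (0 : ℝ) 1) (hδ : |x - a| ≤ δ)
    (hx' : |x - a| ≤ 4 * (x * (1 - x))) : bregmanBound L x a ≤ (4 + 2 * L) * δ := by
  have hvar : 0 < x * (1 - x) := mul_pos hx.1 (sub_pos.2 hx.2)
  have hchi : (x - a) ^ 2 / (x * (1 - x)) ≤ 4 * δ := by
    rw [div_le_iff₀ hvar]
    calc (x - a) ^ 2 = |x - a| * |x - a| := by rw [← sq_abs, sq]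
      _ ≤ δ * (4 * (x * (1 - x))) := by gcongr; exact (abs_nonneg _).trans hδ
      _ = 4 * δ * (x * (1 - x)) := by ring
  have hlip : 2 * L * |x - a| ≤ 2 * L * δ := by gcongr
  unfold bregmanBound
  linarith

theorem exists_Ioo_bregmanBound_le {L δ a : ℝ} (hL : 0 ≤ L) (hδ : δ ≤ 1 / 4)
    (ha : a ∈ Icc (0 : ℝ) 1) :
    ∃ p, Ioo p (p + δ) ⊆ Ioo 0 1 ∧ ∀ x ∈ Ioo p (p + δ), bregmanBound L x a ≤ (4 + 2 * L) * δ := by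
  obtain ⟨ha0, ha1⟩ := ha
  rcases le_total a (1 / 2) with h | h
  · have hsub : Ioo a (a + δ) ⊆ Ioo 0 1 := Ioo_subset_Ioo ha0 (by linarith)
    refine ⟨a, hsub, fun x hx => bregmanBound_le hL (hsub hx) ?_ ?_⟩ <;>
      rw [abs_of_pos (sub_pos.2 hx.1)] <;> nlinarith [hx.1, hx.2]
  · have hsub : Ioo (a - δ) (a - δ + δ) ⊆ Ioo 0 1 := Ioo_subset_Ioo (by linarith) (by linarith)
    refine ⟨a - δ, hsub, fun x hx => bregmanBound_le hL (hsub hx) ?_ ?_⟩ <;>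
      rw [abs_of_neg (by linarith [hx.2])] <;> nlinarith [hx.1, hx.2]

theorem natCast_div_mem_Icc {k N : ℕ} (hk : k ≤ N) : (k : ℝ) / N ∈ Icc (0 : ℝ) 1 :=
  ⟨by positivity, div_le_one_of_le₀ (by exact_mod_cast hk) (by positivity)⟩

-- Rounding towards the nearer endpoint keeps `|x - k / N|` below `2 x (1 - x)`.
theorem exists_nat_bregmanBound_le {L x : ℝ} (hL : 0 ≤ L) {N : ℕ} (hN : 0 < N)
    (hx : x ∈ Ioo (0 : ℝ) 1) :
    ∃ k ≤ N, bregmanBound L x ((k : ℝ) / N) ≤ (4 + 2 * L) * (1 / N) := by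
  have hN' : (0 : ℝ) < N := by exact_mod_cast hN
  have hx0 := hx.1
  have hx1 := hx.2
  have hNx : 0 ≤ N * x := by positivity
  rcases le_total x (1 / 2) with h | h
  · have hfloor : (⌊N * x⌋₊ : ℝ) / N ≤ x := (div_le_iff₀' hN').2 (Nat.floor_le hNx)
    have hlt : x ≤ ⌊N * x⌋₊ / N + 1 / N := by
      rw [← add_div, le_div_iff₀' hN']
      exact (Nat.lt_floor_add_one _).le
    have hk : ⌊N * x⌋₊ ≤ N := Nat.floor_le_of_le (by nlinarith)
    have hk0 := (natCast_div_mem_Icc hk).1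
    refine ⟨_, hk, bregmanBound_le hL hx ?_ ?_⟩ <;>
      rw [abs_of_nonneg (sub_nonneg.2 hfloor)] <;> nlinarith
  · have hceil : x ≤ (⌈N * x⌉₊ : ℝ) / N := (le_div_iff₀' hN').2 (Nat.le_ceil _)
    have hlt : (⌈N * x⌉₊ : ℝ) / N ≤ x + 1 / N := by
      rw [div_le_iff₀' hN', mul_add, mul_one_div_cancel hN'.ne']
      exact (Nat.ceil_lt_add_one hNx).le
    have hk : ⌈N * x⌉₊ ≤ N := Nat.ceil_le.2 (by nlinarith)
    have hk1 := (natCast_div_mem_Icc hk).2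
    refine ⟨_, hk, bregmanBound_le hL hx ?_ ?_⟩ <;>
      rw [abs_of_nonpos (sub_nonpos.2 hceil)] <;> nlinarith

theorem Phase_nonneg {G : ℝ → ℝ} {S : Set ℝ} {x a : ℝ} (hG : ConvexOn ℝ S G) (hx : x ∈ S)
    (ha : a ∈ S) (hd : DifferentiableAt ℝ G x) : 0 ≤ Phase G a x := by
  unfold Phase
  rcases lt_trichotomy x a with h | rfl | h
  · have := hG.deriv_le_slope hx ha h hd
    rw [slope_def_field, le_div_iff₀ (sub_pos.2 h)] at this
    linarith
  · simp
  · have := hG.slope_le_deriv ha hx h hd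
    rw [slope_def_field, div_le_iff₀ (sub_pos.2 h)] at this
    linarith

theorem sub_tangent_le_bregmanBound {G : ℝ → ℝ} {L : ℝ≥0} {x a s : ℝ}
    (hG : LipschitzOnWith L (G - GP) (Icc 0 1)) (hx : x ∈ Ioo (0 : ℝ) 1)
    (ha : a ∈ Icc (0 : ℝ) 1) (hs : |s - deriv GP x| ≤ L) :
    (x - a) * s - (G x - G a) ≤ bregmanBound L x a := by
  have hGP := Phase_GP_le hx ha
  have hslope : (x - a) * (s - deriv GP x) ≤ L * |x - a| := by
    calc (x - a) * (s - deriv GP x) ≤ |x - a| * |s - deriv GP x| :=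
          (le_abs_self _).trans_eq (abs_mul _ _)
      _ ≤ L * |x - a| := by rw [mul_comm]; gcongr
  have hlip : (G a - GP a) - (G x - GP x) ≤ L * |x - a| := by
    simpa only [Real.dist_eq, abs_sub_comm a x, Pi.sub_apply] using
      (le_abs_self _).trans (hG.dist_le_mul a ha x (Ioo_subset_Icc_self hx))
  unfold bregmanBound
  unfold Phase at hGP
  linarith

theorem Phase_le_bregmanBound {G : ℝ → ℝ} {L : ℝ≥0} {x a : ℝ}
    (hG : LipschitzOnWith L (G - GP) (Icc 0 1)) (hx : x ∈ Ioo (0 : ℝ) 1)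
    (ha : a ∈ Icc (0 : ℝ) 1) (hd : DifferentiableAt ℝ G x) :
    Phase G a x ≤ bregmanBound L x a := by
  refine sub_tangent_le_bregmanBound hG hx ha ?_
  rw [← deriv_sub hd (hasDerivAt_GP hx).differentiableAt]
  exact norm_deriv_le_of_lipschitzOn (Icc_mem_nhds hx.1 hx.2) hG

theorem continuousOn_of_lipschitzOnWith_sub_GP {G : ℝ → ℝ} {L : ℝ≥0} {S : Set ℝ}
    (hG : LipschitzOnWith L (G - GP) S) : ContinuousOn G S := by
  simpa only [sub_add_cancel] using hG.continuousOn.add continuous_GP.continuousOn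

-- `Phase G a x` involves a junk value of `deriv G x` where `G` is not differentiable; this null set
-- does not affect `Qnorm`.
theorem ae_differentiableAt_of_lipschitzOnWith_sub_GP {G : ℝ → ℝ} {L : ℝ≥0}
    (hG : LipschitzOnWith L (G - GP) (Icc 0 1)) :
    ∀ᵐ x, x ∈ Ioo (0 : ℝ) 1 → DifferentiableAt ℝ G x := by
  filter_upwards [hG.ae_differentiableWithinAt_of_mem_real] with x hx hxI
  have hsub := (hx (Ioo_subset_Icc_self hxI)).differentiableAt (Icc_mem_nhds hxI.1 hxI.2)
  simpa only [sub_add_cancel] using hsub.add (hasDerivAt_GP hxI).differentiableAt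

/-! ### Norming constants -/

theorem Qnorm_nonneg (G : ℝ → ℝ) (N : ℕ) (a : ℝ) : 0 ≤ Qnorm G N a :=
  mul_nonneg (by positivity)
    (intervalIntegral.integral_nonneg zero_le_one fun _ _ => (Real.exp_pos _).le)

theorem Qnorm_eq_setIntegral (G : ℝ → ℝ) (N : ℕ) (a : ℝ) :
    Qnorm G N a = 2 * Real.pi * ∫ x in Ioo (0 : ℝ) 1, Real.exp (-(N : ℝ) * Phase G a x) := by
  rw [Qnorm, intervalIntegral.integral_of_le zero_le_one, integral_Ioc_eq_integral_Ioo]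

section Qnorm

variable {G : ℝ → ℝ} {L : ℝ≥0} {a : ℝ}

theorem ae_exp_neg_Phase_le_one (hG : LipschitzOnWith L (G - GP) (Icc 0 1))
    (hconv : ConvexOn ℝ (Icc 0 1) G) (N : ℕ) (ha : a ∈ Icc (0 : ℝ) 1) :
    ∀ᵐ x, x ∈ Ioo (0 : ℝ) 1 → Real.exp (-(N : ℝ) * Phase G a x) ≤ 1 := by
  filter_upwards [ae_differentiableAt_of_lipschitzOnWith_sub_GP hG] with x hd hx
  have hnonneg := Phase_nonneg hconv (Ioo_subset_Icc_self hx) ha (hd hx)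
  rw [Real.exp_le_one_iff, neg_mul, neg_nonpos]
  positivity

theorem integrableOn_exp_neg_Phase (hG : LipschitzOnWith L (G - GP) (Icc 0 1))
    (hconv : ConvexOn ℝ (Icc 0 1) G) (N : ℕ) (ha : a ∈ Icc (0 : ℝ) 1) :
    IntegrableOn (fun x => Real.exp (-(N : ℝ) * Phase G a x)) (Ioo 0 1) := by
  have hGm : AEMeasurable G (volume.restrict (Ioo 0 1)) :=
    ((continuousOn_of_lipschitzOnWith_sub_GP hG).mono Ioo_subset_Icc_self).aemeasurable
      measurableSet_Ioo
  refine Integrable.of_bound (C := 1) ?_ ?_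
  · unfold Phase
    refine AEMeasurable.aestronglyMeasurable ?_
    fun_prop
  · refine (ae_restrict_iff' measurableSet_Ioo).2 ?_
    simpa only [Real.norm_of_nonneg (Real.exp_pos _).le] using
      ae_exp_neg_Phase_le_one hG hconv N ha

theorem Qnorm_le_two_pi (hG : LipschitzOnWith L (G - GP) (Icc 0 1))
    (hconv : ConvexOn ℝ (Icc 0 1) G) (N : ℕ) (ha : a ∈ Icc (0 : ℝ) 1) :
    Qnorm G N a ≤ 2 * Real.pi := by
  rw [Qnorm_eq_setIntegral]
  refine mul_le_of_le_one_right (by positivity) ?_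
  calc ∫ x in Ioo (0 : ℝ) 1, Real.exp (-(N : ℝ) * Phase G a x)
      ≤ ∫ _ in Ioo (0 : ℝ) 1, (1 : ℝ) :=
        setIntegral_mono_on_ae (integrableOn_exp_neg_Phase hG hconv N ha)
          (integrableOn_const (by simp)) measurableSet_Ioo (ae_exp_neg_Phase_le_one hG hconv N ha)
    _ = 1 := by simp

theorem mul_exp_le_setIntegral_exp_neg_Phase (hG : LipschitzOnWith L (G - GP) (Icc 0 1))
    (hconv : ConvexOn ℝ (Icc 0 1) G) (N : ℕ) (ha : a ∈ Icc (0 : ℝ) 1) {δ : ℝ} (hδ0 : 0 ≤ δ)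
    (hδ : δ ≤ 1 / 4) :
    δ * Real.exp (-(N * ((4 + 2 * L) * δ))) ≤
      ∫ x in Ioo (0 : ℝ) 1, Real.exp (-(N : ℝ) * Phase G a x) := by
  obtain ⟨p, hsub, hp⟩ := exists_Ioo_bregmanBound_le L.coe_nonneg hδ ha
  have hint := integrableOn_exp_neg_Phase hG hconv N ha
  have hlow : ∀ᵐ x, x ∈ Ioo p (p + δ) →
      Real.exp (-(N * ((4 + 2 * L) * δ))) ≤ Real.exp (-(N : ℝ) * Phase G a x) := by
    filter_upwards [ae_differentiableAt_of_lipschitzOnWith_sub_GP hG] with x hd hx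
    rw [neg_mul]
    gcongr
    exact (Phase_le_bregmanBound hG (hsub hx) ha (hd (hsub hx))).trans (hp x hx)
  calc δ * Real.exp (-(N * ((4 + 2 * L) * δ)))
      = ∫ _ in Ioo p (p + δ), Real.exp (-(N * ((4 + 2 * L) * δ))) := by
        simp [hδ0]
    _ ≤ ∫ x in Ioo p (p + δ), Real.exp (-(N : ℝ) * Phase G a x) :=
        setIntegral_mono_on_ae (integrableOn_const (by simp)) (hint.mono_set hsub)
          measurableSet_Ioo hlow
    _ ≤ ∫ x in Ioo (0 : ℝ) 1, Real.exp (-(N : ℝ) * Phase G a x) :=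
        setIntegral_mono_set hint (ae_of_all _ fun _ => (Real.exp_pos _).le) hsub.eventuallyLE

theorem exp_div_le_Qnorm (hG : LipschitzOnWith L (G - GP) (Icc 0 1))
    (hconv : ConvexOn ℝ (Icc 0 1) G) {N : ℕ} (hN : 0 < N) (ha : a ∈ Icc (0 : ℝ) 1) :
    Real.exp (-(4 + 2 * L)) / N ≤ Qnorm G N a := by
  have hN1 : (1 : ℝ) ≤ N := by exact_mod_cast hN
  have hδ : 1 / (4 * (N : ℝ)) ≤ 1 / 4 := by gcongr; linarith
  have hexponent : (N : ℝ) * ((4 + 2 * L) * (1 / (4 * N))) ≤ 4 + 2 * L := by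
    field_simp
    linarith [L.coe_nonneg]
  rw [Qnorm_eq_setIntegral]
  calc Real.exp (-(4 + 2 * L)) / N = 4 * (1 / (4 * N) * Real.exp (-(4 + 2 * L))) := by field_simp
    _ ≤ 2 * Real.pi * (1 / (4 * N) * Real.exp (-(N * ((4 + 2 * L) * (1 / (4 * N)))))) := by
        gcongr
        linarith [Real.pi_gt_three]
    _ ≤ 2 * Real.pi * ∫ x in Ioo (0 : ℝ) 1, Real.exp (-(N : ℝ) * Phase G a x) := by
        gcongr
        exact mul_exp_le_setIntegral_exp_neg_Phase hG hconv N ha (by positivity) hδ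

end Qnorm

/-! ### The Legendre transform on the grid -/

/-- Defect in the Fenchel–Young inequality between `G` on `[0, 1]` and its Legendre transform. -/
noncomputable def fenchelGap (G : ℝ → ℝ) (ρ a : ℝ) : ℝ :=
  Leg G (Icc 0 1) ρ - (a * ρ - G a)

theorem fenchelGap_nonneg {G : ℝ → ℝ} (hG : ContinuousOn G (Icc 0 1)) (ρ : ℝ) {a : ℝ}
    (ha : a ∈ Icc (0 : ℝ) 1) : 0 ≤ fenchelGap G ρ a := by
  have hcont : ContinuousOn (fun x => x * ρ - G x) (Icc 0 1) := by fun_prop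
  exact sub_nonneg.2 (le_csSup (isCompact_Icc.image_of_continuousOn hcont).bddAbove ⟨a, ha, rfl⟩)

theorem exists_fenchelGap_eq_zero {G : ℝ → ℝ} (hG : ContinuousOn G (Icc 0 1)) (ρ : ℝ) :
    ∃ x ∈ Icc (0 : ℝ) 1, fenchelGap G ρ x = 0 := by
  have hcont : ContinuousOn (fun x => x * ρ - G x) (Icc 0 1) := by fun_prop
  obtain ⟨x, hx, hsup, -⟩ :=
    isCompact_Icc.exists_sSup_image_eq_and_ge (nonempty_Icc.2 zero_le_one) hcont
  exact ⟨x, hx, sub_eq_zero.2 hsup⟩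

theorem abs_le_of_hasDerivAt_of_sub_le {h : ℝ → ℝ} {h' x C : ℝ} (hd : HasDerivAt h h' x)
    (hle : ∀ᶠ y in 𝓝 x, h y - h x ≤ C * |y - x|) : |h'| ≤ C := by
  obtain ⟨hleft, hright⟩ := hasDerivAt_iff_tendsto_slope_left_right.1 hd
  refine abs_le.2 ⟨ge_of_tendsto hleft ?_, le_of_tendsto hright ?_⟩
  · filter_upwards [nhdsWithin_le_nhds hle, self_mem_nhdsWithin] with y hy hyx
    rw [abs_of_neg (sub_neg.2 hyx)] at hy
    rw [slope_def_field, le_div_iff_of_neg (sub_neg.2 hyx)]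
    linarith
  · filter_upwards [nhdsWithin_le_nhds hle, self_mem_nhdsWithin] with y hy hxy
    rw [abs_of_pos (sub_pos.2 hxy)] at hy
    rwa [slope_def_field, div_le_iff₀ (sub_pos.2 hxy)]

theorem abs_sub_deriv_GP_le_of_fenchelGap_eq_zero {G : ℝ → ℝ} {L : ℝ≥0} {ρ x : ℝ}
    (hG : LipschitzOnWith L (G - GP) (Icc 0 1)) (hx : x ∈ Ioo (0 : ℝ) 1)
    (hmax : fenchelGap G ρ x = 0) : |ρ - deriv GP x| ≤ L := by
  have hd : HasDerivAt (fun y => y * ρ - GP y) (ρ - deriv GP x) x :=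
    (hasDerivAt_mul_const ρ).sub (hasDerivAt_GP hx).differentiableAt.hasDerivAt
  refine abs_le_of_hasDerivAt_of_sub_le hd ?_
  filter_upwards [Icc_mem_nhds hx.1 hx.2] with y hy
  have hgap := fenchelGap_nonneg (continuousOn_of_lipschitzOnWith_sub_GP hG) ρ hy
  have hlip : (G y - GP y) - (G x - GP x) ≤ L * |y - x| :=
    (le_abs_self _).trans (hG.dist_le_mul y hy x (Ioo_subset_Icc_self hx))
  unfold fenchelGap at hgap hmax
  linarith

theorem exists_nat_fenchelGap_le {G : ℝ → ℝ} {L : ℝ≥0} (hG : LipschitzOnWith L (G - GP) (Icc 0 1))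
    {N : ℕ} (hN : 0 < N) (ρ : ℝ) :
    ∃ k ≤ N, fenchelGap G ρ ((k : ℝ) / N) ≤ (4 + 2 * L) * (1 / N) := by
  have hN' : (N : ℝ) ≠ 0 := by positivity
  have hbound : (0 : ℝ) ≤ (4 + 2 * L) * (1 / N) := by positivity
  obtain ⟨x, hx, hmax⟩ :=
    exists_fenchelGap_eq_zero (continuousOn_of_lipschitzOnWith_sub_GP hG) ρ
  rcases eq_endpoints_or_mem_Ioo_of_mem_Icc hx with rfl | rfl | hx
  · exact ⟨0, N.zero_le, by rwa [Nat.cast_zero, zero_div, hmax]⟩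
  · exact ⟨N, le_rfl, by rwa [div_self hN', hmax]⟩
  · obtain ⟨k, hk, hkx⟩ := exists_nat_bregmanBound_le L.coe_nonneg hN hx
    have htangent := sub_tangent_le_bregmanBound hG hx (natCast_div_mem_Icc hk)
      (abs_sub_deriv_GP_le_of_fenchelGap_eq_zero hG hx hmax)
    refine ⟨k, hk, le_trans ?_ hkx⟩
    unfold fenchelGap at hmax ⊢
    linarith

/-! ### Bounds on the Bergman sum -/

theorem rpow_mul_rpow_mem_Icc {a b m M t : ℝ} (hm : 0 < m) (ha : a ∈ Icc m M) (hb : b ∈ Icc m M)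
    (ht : t ∈ Icc (0 : ℝ) 1) : a ^ (1 - t) * b ^ t ∈ Icc m M := by
  have hself {c : ℝ} (hc : 0 < c) : c ^ (1 - t) * c ^ t = c := by
    rw [← Real.rpow_add hc, sub_add_cancel, Real.rpow_one]
  have ha0 : 0 < a := hm.trans_le ha.1
  have hb0 : 0 < b := hm.trans_le hb.1
  have hM0 : 0 < M := ha0.trans_le ha.2
  have ht0 : 0 ≤ t := ht.1
  have ht1 : 0 ≤ 1 - t := sub_nonneg.2 ht.2
  constructor
  · calc m = m ^ (1 - t) * m ^ t := (hself hm).symm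
      _ ≤ a ^ (1 - t) * b ^ t := by gcongr; exacts [ha.1, hb.1]
  · calc a ^ (1 - t) * b ^ t ≤ M ^ (1 - t) * M ^ t := by gcongr; exacts [ha.2, hb.2]
      _ = M := hself hM0

theorem sum_exp_div_le {ι : Type*} {s : Finset ι} {e w : ι → ℝ} {m : ℝ} (hm : 0 < m)
    (he : ∀ i ∈ s, e i ≤ 0) (hw : ∀ i ∈ s, m ≤ w i) :
    ∑ i ∈ s, Real.exp (e i) / w i ≤ s.card / m := by
  calc ∑ i ∈ s, Real.exp (e i) / w i ≤ s.card • (1 / m) :=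
        Finset.sum_le_card_nsmul _ _ _ fun i hi =>
          div_le_div₀ zero_le_one (Real.exp_le_one_iff.2 (he i hi)) hm (hw i hi)
    _ = s.card / m := by rw [nsmul_eq_mul, mul_one_div]

theorem le_sum_exp_div {ι : Type*} {s : Finset ι} {e w : ι → ℝ} {K M : ℝ} {i : ι} (hi : i ∈ s)
    (hw : ∀ j ∈ s, 0 < w j) (hM : w i ≤ M) (he : -K ≤ e i) :
    Real.exp (-K) / M ≤ ∑ j ∈ s, Real.exp (e j) / w j :=
  calc Real.exp (-K) / M ≤ Real.exp (e i) / w i :=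
        div_le_div₀ (Real.exp_pos _).le (Real.exp_le_exp.2 he) (hw i hi) hM
    _ ≤ ∑ j ∈ s, Real.exp (e j) / w j :=
        Finset.single_le_sum (f := fun j => Real.exp (e j) / w j)
          (fun j hj => div_nonneg (Real.exp_pos _).le (hw j hj).le) hi

/-- Geometric interpolation at time `t` between the norming constants of the two endpoint
potentials. -/
noncomputable def normingMean (f0 f1 : ℝ → ℝ) (N : ℕ) (t a : ℝ) : ℝ :=
  Qnorm (Gt f0 f1 0) N a ^ (1 - t) * Qnorm (Gt f0 f1 1) N a ^ t

theorem QQ_rpow_mul_QQ_rpow (f0 f1 : ℝ → ℝ) (N : ℕ) (t a : ℝ) :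
    QQ (Gt f0 f1 0) N a ^ (1 - t) * QQ (Gt f0 f1 1) N a ^ t =
      normingMean f0 f1 N t a * Real.exp (N * Gt f0 f1 t a) := by
  have hG : (N : ℝ) * Gt f0 f1 t a =
      N * Gt f0 f1 0 a * (1 - t) + N * Gt f0 f1 1 a * t := by
    simp only [Gt]
    ring
  rw [hG, Real.exp_add, Real.exp_mul (_ * _) (1 - t), Real.exp_mul (_ * _) t, QQ, QQ,
    Real.mul_rpow (Qnorm_nonneg _ _ _) (Real.exp_pos _).le,
    Real.mul_rpow (Qnorm_nonneg _ _ _) (Real.exp_pos _).le, mul_mul_mul_comm, normingMean]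

theorem Ecal_eq_sum_exp_fenchelGap (f0 f1 : ℝ → ℝ) (N : ℕ) (t ρ : ℝ) :
    Ecal f0 f1 N t ρ = ∑ k ∈ Finset.range (N + 1),
      Real.exp (-(N * fenchelGap (Gt f0 f1 t) ρ ((k : ℝ) / N))) /
        normingMean f0 f1 N t ((k : ℝ) / N) := by
  refine Finset.sum_congr rfl fun k _ => ?_
  rw [QQ_rpow_mul_QQ_rpow, mul_comm (normingMean _ _ _ _ _), ← div_div, ← Real.exp_sub, fenchelGap]
  congr 2
  ring

theorem lipschitzOnWith_Gt_sub_GP {f0 f1 : ℝ → ℝ} {L : ℝ≥0} {S : Set ℝ}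
    (hf0 : LipschitzOnWith L f0 S) (hf1 : LipschitzOnWith L f1 S) {t : ℝ}
    (ht : t ∈ Icc (0 : ℝ) 1) : LipschitzOnWith L (Gt f0 f1 t - GP) S := by
  refine LipschitzOnWith.of_dist_le_mul fun x hx y hy => ?_
  have h0 := hf0.dist_le_mul x hx y hy
  have h1 := hf1.dist_le_mul x hx y hy
  have ht0 : 0 ≤ t := ht.1
  have ht1 : 0 ≤ 1 - t := sub_nonneg.2 ht.2
  rw [Real.dist_eq] at h0 h1 ⊢
  calc |(Gt f0 f1 t - GP) x - (Gt f0 f1 t - GP) y|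
      = |(1 - t) * (f0 x - f0 y) + t * (f1 x - f1 y)| := by
        simp only [Gt, Pi.sub_apply]
        congr 1
        ring
    _ ≤ (1 - t) * |f0 x - f0 y| + t * |f1 x - f1 y| := by
        refine (abs_add_le _ _).trans_eq ?_
        rw [abs_mul, abs_mul, abs_of_nonneg ht0, abs_of_nonneg ht1]
    _ ≤ (1 - t) * (L * dist x y) + t * (L * dist x y) := by gcongr
    _ = L * dist x y := by ring

section Ecal

variable {f0 f1 : ℝ → ℝ} {L : ℝ≥0} (hf0 : LipschitzOnWith L f0 (Icc 0 1))
  (hf1 : LipschitzOnWith L f1 (Icc 0 1)) (hG0 : ConvexOn ℝ (Icc 0 1) (Gt f0 f1 0))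
  (hG1 : ConvexOn ℝ (Icc 0 1) (Gt f0 f1 1)) {N : ℕ} (hN : 0 < N) {t : ℝ}
  (ht : t ∈ Icc (0 : ℝ) 1)
include hf0 hf1 hG0 hG1 hN ht

theorem normingMean_mem_Icc {a : ℝ} (ha : a ∈ Icc (0 : ℝ) 1) :
    normingMean f0 f1 N t a ∈ Icc (Real.exp (-(4 + 2 * L)) / N) (2 * Real.pi) := by
  have hlip0 := lipschitzOnWith_Gt_sub_GP hf0 hf1 (left_mem_Icc.2 zero_le_one)
  have hlip1 := lipschitzOnWith_Gt_sub_GP hf0 hf1 (right_mem_Icc.2 zero_le_one)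
  exact rpow_mul_rpow_mem_Icc (by positivity)
    ⟨exp_div_le_Qnorm hlip0 hG0 hN ha, Qnorm_le_two_pi hlip0 hG0 N ha⟩
    ⟨exp_div_le_Qnorm hlip1 hG1 hN ha, Qnorm_le_two_pi hlip1 hG1 N ha⟩ ht

theorem Ecal_le_mul_sq (ρ : ℝ) :
    Ecal f0 f1 N t ρ ≤ 2 * Real.pi * Real.exp (4 + 2 * L) * (N : ℝ) ^ 2 := by
  have hN1 : (1 : ℝ) ≤ N := by exact_mod_cast hN
  have hcont := continuousOn_of_lipschitzOnWith_sub_GP (lipschitzOnWith_Gt_sub_GP hf0 hf1 ht)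
  have hgrid {k : ℕ} (hk : k ∈ Finset.range (N + 1)) : (k : ℝ) / N ∈ Icc (0 : ℝ) 1 :=
    natCast_div_mem_Icc (Finset.mem_range_succ_iff.1 hk)
  rw [Ecal_eq_sum_exp_fenchelGap]
  calc ∑ k ∈ Finset.range (N + 1), _
      ≤ (Finset.range (N + 1)).card / (Real.exp (-(4 + 2 * L)) / N) :=
        sum_exp_div_le (by positivity)
          (fun k hk => neg_nonpos.2
            (mul_nonneg N.cast_nonneg (fenchelGap_nonneg hcont ρ (hgrid hk))))
          fun k hk => (normingMean_mem_Icc hf0 hf1 hG0 hG1 hN ht (hgrid hk)).1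
    _ = (N + 1) * (N * Real.exp (4 + 2 * L)) := by
        rw [Finset.card_range, Real.exp_neg]
        push_cast
        field_simp
    _ ≤ (2 * Real.pi * N) * (N * Real.exp (4 + 2 * L)) := by
        gcongr
        nlinarith [Real.pi_gt_three]
    _ = 2 * Real.pi * Real.exp (4 + 2 * L) * (N : ℝ) ^ 2 := by ring

theorem inv_le_Ecal (ρ : ℝ) : (2 * Real.pi * Real.exp (4 + 2 * L))⁻¹ ≤ Ecal f0 f1 N t ρ := by
  obtain ⟨k, hk, hgap⟩ := exists_nat_fenchelGap_le (lipschitzOnWith_Gt_sub_GP hf0 hf1 ht) hN ρ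
  have hmean {j : ℕ} (hj : j ≤ N) :=
    normingMean_mem_Icc hf0 hf1 hG0 hG1 hN ht (natCast_div_mem_Icc hj)
  rw [Ecal_eq_sum_exp_fenchelGap, mul_inv_rev, ← Real.exp_neg, ← div_eq_mul_inv]
  refine le_sum_exp_div (Finset.mem_range_succ_iff.2 hk) (fun j hj => ?_) (hmean hk).2 ?_
  · exact lt_of_lt_of_le (by positivity) (hmean (Finset.mem_range_succ_iff.1 hj)).1
  · rw [mul_one_div, le_div_iff₀' (by positivity)] at hgap
    exact neg_le_neg hgap

end Ecal

theorem convexOn_Icc_of_iteratedDeriv_two_pos {G : ℝ → ℝ} {a b : ℝ} (hG : ContinuousOn G (Icc a b))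
    (hpos : ∀ x ∈ Ioo a b, 0 < iteratedDeriv 2 G x) : ConvexOn ℝ (Icc a b) G :=
  (strictConvexOn_of_deriv2_pos (convex_Icc a b) hG
    (by simpa only [interior_Icc, iteratedDeriv_eq_iterate] using hpos)).convexOn

theorem convexOn_Gt_of_iteratedDeriv_two_pos {f0 f1 : ℝ → ℝ} {a b t : ℝ}
    (hf0 : ContinuousOn f0 (Icc a b)) (hf1 : ContinuousOn f1 (Icc a b))
    (hpos : ∀ x ∈ Ioo a b, 0 < iteratedDeriv 2 (Gt f0 f1 t) x) :
    ConvexOn ℝ (Icc a b) (Gt f0 f1 t) :=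
  convexOn_Icc_of_iteratedDeriv_two_pos
    (continuous_GP.continuousOn.add ((hf0.const_mul _).add (hf1.const_mul _))) hpos

theorem abs_log_le_mul_log {B E n : ℝ} (hB : 1 ≤ B) (hn : 2 ≤ n) (hlow : B⁻¹ ≤ E)
    (hup : E ≤ B * n ^ 2) : |Real.log E| ≤ (Real.log B / Real.log 2 + 2) * Real.log n := by
  have hB0 : 0 < B := by linarith
  have hlogB : Real.log B ≤ Real.log B / Real.log 2 * Real.log n := by
    rw [div_mul_eq_mul_div, le_div_iff₀ (Real.log_pos one_lt_two)]
    gcongr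
    exact Real.log_nonneg hB
  have hlogn : 0 ≤ Real.log n := Real.log_nonneg (by linarith)
  have hlog_low := Real.log_le_log (by positivity) hlow
  have hlog_up := Real.log_le_log (lt_of_lt_of_le (by positivity) hlow) hup
  rw [Real.log_inv] at hlog_low
  rw [Real.log_mul hB0.ne' (by positivity), Real.log_pow, Nat.cast_ofNat] at hlog_up
  rw [abs_le]
  constructor <;> linarith

theorem bergman_cp1_C0_convergence_general {f0 f1 : ℝ → ℝ} {K0 K1 : ℝ≥0}
    (hf0 : LipschitzOnWith K0 f0 (Icc 0 1)) (hf1 : LipschitzOnWith K1 f1 (Icc 0 1))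
    (hG0 : ConvexOn ℝ (Icc 0 1) (Gt f0 f1 0)) (hG1 : ConvexOn ℝ (Icc 0 1) (Gt f0 f1 1)) :
    ∃ C : ℝ, 0 < C ∧
      ∀ N : ℕ, 2 ≤ N → ∀ t ∈ Set.Icc (0 : ℝ) 1, ∀ ρ : ℝ,
        |(1 / (N : ℝ)) * Real.log (Ecal f0 f1 N t ρ)| ≤ C * Real.log (N : ℝ) / (N : ℝ) := by
  replace hf0 := hf0.weaken (le_max_left K0 K1)
  replace hf1 := hf1.weaken (le_max_right K0 K1)
  set B : ℝ := 2 * Real.pi * Real.exp (4 + 2 * (max K0 K1 : ℝ≥0))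
  have hB : 1 ≤ B := one_le_mul_of_one_le_of_one_le (by linarith [Real.pi_gt_three])
    (Real.one_le_exp (by positivity))
  have hC : 0 ≤ Real.log B / Real.log 2 :=
    div_nonneg (Real.log_nonneg hB) (Real.log_nonneg one_le_two)
  refine ⟨Real.log B / Real.log 2 + 2, by positivity, fun N hN t ht ρ => ?_⟩
  have hN0 : 0 < N := by omega
  rw [abs_mul, abs_of_nonneg (by positivity), one_div_mul_eq_div]
  gcongr
  exact abs_log_le_mul_log hB (by exact_mod_cast hN) (inv_le_Ecal hf0 hf1 hG0 hG1 hN0 ht ρ)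
    (Ecal_le_mul_sq hf0 hf1 hG0 hG1 hN0 ht ρ)

theorem bergman_cp1_C0_convergence
    (f0 f1 : ℝ → ℝ) (hf0 : ContDiff ℝ (⊤ : ℕ∞) f0) (hf1 : ContDiff ℝ (⊤ : ℕ∞) f1)
    (hG0 : ∀ x ∈ Set.Ioo (0:ℝ) 1, 0 < iteratedDeriv 2 (Gt f0 f1 0) x)
    (hG1 : ∀ x ∈ Set.Ioo (0:ℝ) 1, 0 < iteratedDeriv 2 (Gt f0 f1 1) x) :
    ∃ C : ℝ, 0 < C ∧
      ∀ N : ℕ, 2 ≤ N → ∀ t ∈ Set.Icc (0:ℝ) 1, ∀ ρ : ℝ,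
        |(1 / (N:ℝ)) * Real.log (Ecal f0 f1 N t ρ)| ≤ C * Real.log (N:ℝ) / (N:ℝ) := by
  obtain ⟨K0, hK0⟩ := hf0.contDiffOn.exists_lipschitzOnWith (by simp) (convex_Icc 0 1) isCompact_Icc
  obtain ⟨K1, hK1⟩ := hf1.contDiffOn.exists_lipschitzOnWith (by simp) (convex_Icc 0 1) isCompact_Icc
  exact bergman_cp1_C0_convergence_general hK0 hK1
    (convexOn_Gt_of_iteratedDeriv_two_pos hK0.continuousOn hK1.continuousOn hG0)
    (convexOn_Gt_of_iteratedDeriv_two_pos hK0.continuousOn hK1.continuousOn hG1)
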